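/- arXiv:1706.00451 — 2 statements merged into one kernel-verified Lean document; each statement's English description precedes it below -/
import Mathlib

section
/- Let ρ be a binary constant-length substitution of length L ≥ 2 with Fourier matrix B(k), and suppose the polynomials Q and R are not equal (equivalently, det B(k) does not vanish identically). Then for Lebesgue-almost every k ∈ ℝ the limit lim_{n→∞} (1/n)·log‖B(k)·B(Lk)···B(L^{n−1}k)‖ exists and equals m(Q−R), the logarithmic Mahler measure of Q−R; equivalently, the minimal Lyapunov exponent of the outward cocycle is χ_min(k) = log√L − m(Q−R) for almost every k. -/
open Filter Polynomial

noncomputable section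

/-- `e k = exp(2πik)`, the point on the unit circle with angle `2πk`. -/
def e (k : ℝ) : ℂ := Complex.exp (2 * Real.pi * Complex.I * k)

/-- Coincidence positions of type `a` (letter `a` encoded as `0`, `b` as `1`). -/
def Ca {L : ℕ} (wa wb : Fin L → Fin 2) : Finset (Fin L) :=
  Finset.univ.filter fun i => wa i = 0 ∧ wb i = 0

/-- Coincidence positions of type `b`. -/
def Cb {L : ℕ} (wa wb : Fin L → Fin 2) : Finset (Fin L) :=
  Finset.univ.filter fun i => wa i = 1 ∧ wb i = 1

/-- Bijective positions where `(w_a)_i = a` and `(w_b)_i = b`. -/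
def Pa {L : ℕ} (wa wb : Fin L → Fin 2) : Finset (Fin L) :=
  Finset.univ.filter fun i => wa i = 0 ∧ wb i = 1

/-- Bijective positions where `(w_a)_i = b` and `(w_b)_i = a`. -/
def Pb {L : ℕ} (wa wb : Fin L → Fin 2) : Finset (Fin L) :=
  Finset.univ.filter fun i => wa i = 1 ∧ wb i = 0

/-- The polynomial `∑_{z ∈ S} X^z` associated with a set of positions. -/
def posPoly {L : ℕ} (S : Finset (Fin L)) : Polynomial ℂ :=
  ∑ z ∈ S, Polynomial.X ^ (z : ℕ)

/-- The Fourier matrix `B(k)` of the substitution determined by `wa, wb`. -/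
def FourierB {L : ℕ} (wa wb : Fin L → Fin 2) (k : ℝ) : Matrix (Fin 2) (Fin 2) ℂ :=
  !![(posPoly (Ca wa wb) + posPoly (Pa wa wb)).eval (e k),
     (posPoly (Ca wa wb) + posPoly (Pb wa wb)).eval (e k);
     (posPoly (Cb wa wb) + posPoly (Pb wa wb)).eval (e k),
     (posPoly (Cb wa wb) + posPoly (Pa wa wb)).eval (e k)]

/-- The logarithmic Mahler measure `m(f) = ∫₀¹ log |f(e^{2πik})| dk`. -/
def logMahler (f : Polynomial ℂ) : ℝ :=
  ∫ k in (0:ℝ)..1, Real.log ‖f.eval (e k)‖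

/-- The operator norm of a matrix, induced by the Euclidean norm on `ℂ²`. -/
def opNorm (M : Matrix (Fin 2) (Fin 2) ℂ) : ℝ :=
  ‖Matrix.toEuclideanCLM (𝕜 := ℂ) M‖

/-- The (forward) matrix product `B(k) · B(Lk) ⋯ B(L^{n-1}k)` of the outward cocycle. -/
def cocycleProd {L : ℕ} (wa wb : Fin L → Fin 2) (k : ℝ) (n : ℕ) :
    Matrix (Fin 2) (Fin 2) ℂ :=
  (((List.range n).map fun m => FourierB wa wb ((L : ℝ) ^ m * k))).prod

/-- Running maxima of Birkhoff sums (including the empty sum). -/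
def maxSum {α : Type*} (T : α → α) (f : α → ℝ) : ℕ → α → ℝ
  | 0 => fun _ => 0
  | n + 1 => fun x => max 0 (f x + maxSum T f n (T x))

section birkhoff
set_option linter.unusedSectionVars false
open MeasureTheory
variable {α : Type*} [MeasurableSpace α] {μ : Measure α} [IsProbabilityMeasure μ] {T : α → α}
  {f : α → ℝ}

lemma maxSum_nonneg (n : ℕ) (x : α) : 0 ≤ maxSum T f n x := by
  cases n with
  | zero => exact le_rfl
  | succ n => exact le_max_left _ _

lemma maxSum_le_succ (n : ℕ) : ∀ x : α, maxSum T f n x ≤ maxSum T f (n + 1) x := by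
  induction n with
  | zero => intro x; exact maxSum_nonneg _ _
  | succ n ih =>
    intro x
    have := ih (T x)
    simp only [maxSum] at this ⊢
    gcongr

lemma maxSum_mono (x : α) : Monotone fun n => maxSum T f n x :=
  monotone_nat_of_le_succ fun n => maxSum_le_succ n x

lemma birkhoffSum_le_maxSum (n : ℕ) : ∀ x : α, birkhoffSum T f n x ≤ maxSum T f n x := by
  induction n with
  | zero => intro x; simp [maxSum]
  | succ n ih =>
    intro x
    rw [birkhoffSum_succ']
    exact (add_le_add_right (ih (T x)) _).trans (le_max_right _ _)

lemma maxSum_measurable (hT : Measurable T) (hf : Measurable f) (n : ℕ) :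
    Measurable (maxSum T f n) := by
  induction n with
  | zero => exact measurable_const
  | succ n ih => exact measurable_const.max (hf.add (ih.comp hT))

lemma maxSum_integrable (hT : MeasurePreserving T μ μ) (hf : Integrable f μ) (n : ℕ) :
    Integrable (maxSum T f n) μ := by
  induction n with
  | zero => exact integrable_zero _ _ _
  | succ n ih =>
    exact (integrable_zero _ _ _).sup (hf.add (hT.integrable_comp_of_integrable ih))

lemma bdd_of_integral_neg (hT : Ergodic T μ) (hfm : Measurable f) (hf : Integrable f μ)
    (hneg : ∫ x, f x ∂μ < 0) : ∀ᵐ x ∂μ, ∃ M : ℕ, ∀ n, birkhoffSum T f n x ≤ M := by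
  have hTm := hT.toMeasurePreserving.measurable
  set E : Set α := {x | ∀ M : ℕ, ∃ n, (M : ℝ) < maxSum T f n x} with hE
  have hEm : MeasurableSet E := by
    have : E = ⋂ M : ℕ, ⋃ n, {x | (M : ℝ) < maxSum T f n x} := by ext x; simp [hE]
    rw [this]
    exact MeasurableSet.iInter fun M => MeasurableSet.iUnion fun n =>
      measurableSet_lt measurable_const (maxSum_measurable hTm hfm n)
  have hinv : T ⁻¹' E = E := by
    ext x
    simp only [hE, Set.mem_preimage, Set.mem_ofPred_eq]
    constructor
    · intro h M
      obtain ⟨K, hK⟩ := exists_nat_ge ((M : ℝ) - f x)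
      obtain ⟨n, hn⟩ := h K
      refine ⟨n + 1, lt_of_lt_of_le ?_ (le_max_right _ _)⟩
      linarith
    · intro h M
      obtain ⟨K, hK⟩ := exists_nat_ge ((M : ℝ) + f x)
      obtain ⟨n, hn⟩ := h K
      refine ⟨n, ?_⟩
      have h1 := hn.trans_le (maxSum_le_succ n x)
      rcases lt_max_iff.1 h1 with h2 | h2
      · have : (0:ℝ) ≤ K := K.cast_nonneg
        linarith
      · linarith
  have hnull : μ E = 0 := by
    rcases hT.toPreErgodic.measure_self_or_compl_eq_zero hEm hinv with h | h
    · exact h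
    exfalso
    have hae : ∀ᵐ x ∂μ, x ∈ E := by rw [ae_iff]; exact h
    have hlim : Tendsto (fun n => ∫ x, (maxSum T f (n + 1) x - maxSum T f n (T x)) ∂μ) atTop
        (nhds (∫ x, f x ∂μ)) := by
      refine tendsto_integral_of_dominated_convergence (fun x => |f x|) ?_ hf.abs ?_ ?_
      · intro n
        exact ((maxSum_measurable hTm hfm _).sub
          ((maxSum_measurable hTm hfm _).comp hTm)).aestronglyMeasurable
      · intro n
        refine ae_of_all _ fun x => ?_
        have h0 := maxSum_nonneg (T := T) (f := f) n (T x)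
        simp only [maxSum, Real.norm_eq_abs]
        rcases max_cases 0 (f x + maxSum T f n (T x)) with ⟨h1, h2⟩ | ⟨h1, h2⟩
        · rw [h1, abs_of_nonpos (by linarith)]
          linarith [neg_abs_le (f x)]
        · rw [h1]; simp
      · filter_upwards [hae] with x hx
        rw [← hinv] at hx
        obtain ⟨K, hK⟩ := exists_nat_ge (- f x)
        obtain ⟨N, hN⟩ := hx K
        refine tendsto_const_nhds.congr' ?_
        filter_upwards [eventually_ge_atTop N] with n hn
        have := maxSum_mono (T := T) (f := f) (T x) hn
        simp only [maxSum] at this ⊢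
        rw [max_eq_right (by linarith)]
        ring
    have hge : 0 ≤ ∫ x, f x ∂μ := by
      refine ge_of_tendsto' hlim fun n => ?_
      have hi : Integrable (fun x => maxSum T f n (T x)) μ :=
        hT.toMeasurePreserving.integrable_comp_of_integrable
          (maxSum_integrable hT.toMeasurePreserving hf n)
      rw [integral_sub (maxSum_integrable hT.toMeasurePreserving hf _) hi]
      have : ∫ x, maxSum T f n (T x) ∂μ = ∫ x, maxSum T f n x ∂μ := by
        have h1 := integral_map (μ := μ) hTm.aemeasurable (f := maxSum T f n)
          (maxSum_measurable hTm hfm n).aestronglyMeasurable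
        rw [hT.toMeasurePreserving.map_eq] at h1
        exact h1.symm
      rw [this, sub_nonneg]
      exact integral_mono (maxSum_integrable hT.toMeasurePreserving hf _)
        (maxSum_integrable hT.toMeasurePreserving hf _) (maxSum_le_succ n)
    linarith
  have : ∀ᵐ x ∂μ, x ∉ E := by rw [ae_iff]; simpa using hnull
  filter_upwards [this] with x hx
  simp only [hE, Set.mem_ofPred_eq, not_forall, not_exists, not_lt] at hx
  obtain ⟨M, hM⟩ := hx
  exact ⟨M, fun n => (birkhoffSum_le_maxSum n x).trans (hM n)⟩

lemma limsup_of_ergodic (hT : Ergodic T μ) (hfm : Measurable f) (hf : Integrable f μ) :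
    ∀ᵐ x ∂μ, ∀ j : ℕ, ∃ M : ℕ, ∀ n : ℕ,
      birkhoffSum T f n x ≤ M + n * (∫ x, f x ∂μ + 1 / ((j : ℝ) + 1)) := by
  rw [ae_all_iff]
  intro j
  have hj : (0 : ℝ) < 1 / ((j : ℝ) + 1) := by positivity
  set c := ∫ x, f x ∂μ + 1 / ((j : ℝ) + 1) with hc
  have := bdd_of_integral_neg (f := fun x => f x - c) hT (hfm.sub measurable_const)
    (hf.sub (integrable_const _)) (by
      rw [integral_sub hf (integrable_const _)]; simp; linarith)
  filter_upwards [this] with x ⟨M, hM⟩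
  refine ⟨M, fun n => ?_⟩
  have := hM n
  simp only [birkhoffSum, Finset.sum_sub_distrib, Finset.sum_const, Finset.card_range,
    nsmul_eq_mul] at this ⊢
  linarith

lemma eventually_of_bound {S : ℕ → ℝ} {c : ℝ}
    (h : ∀ j : ℕ, ∃ M : ℕ, ∀ n : ℕ, S n ≤ M + n * (c + 1 / ((j : ℝ) + 1))) {ε : ℝ} (hε : 0 < ε) :
    ∀ᶠ n : ℕ in atTop, S n ≤ n * (c + ε) := by
  obtain ⟨j, hj⟩ := exists_nat_one_div_lt (half_pos hε)
  obtain ⟨M, hM⟩ := h j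
  obtain ⟨N, hN⟩ := exists_nat_ge ((M : ℝ) / (ε / 2))
  filter_upwards [eventually_ge_atTop N] with n hn
  have hn' : (N : ℝ) ≤ n := by exact_mod_cast hn
  rw [div_le_iff₀ (half_pos hε)] at hN
  have h1 := hM n
  have h2 : (n : ℝ) * (1 / ((j : ℝ) + 1)) ≤ n * (ε / 2) := by gcongr
  have h3 : (N : ℝ) * (ε / 2) ≤ n * (ε / 2) := by gcongr
  nlinarith

/-- Birkhoff's theorem, in ε-form. -/
lemma birkhoff_ae (hT : Ergodic T μ) (hfm : Measurable f) (hf : Integrable f μ) :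
    ∀ᵐ x ∂μ, ∀ ε : ℝ, 0 < ε → ∀ᶠ n : ℕ in atTop,
      |birkhoffSum T f n x - n * ∫ x, f x ∂μ| ≤ n * ε := by
  filter_upwards [limsup_of_ergodic hT hfm hf, limsup_of_ergodic hT hfm.neg hf.neg] with x h1 h2
  intro ε hε
  filter_upwards [eventually_of_bound h1 hε, eventually_of_bound h2 hε] with n h3 h4
  simp only [Pi.neg_apply, integral_neg, birkhoffSum, Finset.sum_neg_distrib] at h3 h4 ⊢
  rw [abs_le]
  constructor <;> linarith

end birkhoff

section circle
open MeasureTheory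

lemma e_eq_toCircle (k : ℝ) : e k = (AddCircle.toCircle (k : UnitAddCircle) : ℂ) := by
  rw [AddCircle.toCircle_apply_mk, Circle.coe_exp, e]
  congr 1
  push_cast
  ring

lemma e_mul_nat (L : ℕ) (k : ℝ) : e (L * k) = e k ^ L := by
  rw [e, e, ← Complex.exp_nat_mul]
  congr 1
  push_cast
  ring

lemma norm_e (k : ℝ) : ‖e k‖ = 1 := by
  rw [e_eq_toCircle]; exact Circle.norm_coe _

lemma e_eq_circleMap (k : ℝ) : e k = circleMap 0 1 (2 * Real.pi * k) := by
  simp only [e, circleMap]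
  push_cast
  rw [zero_add, one_mul]
  congr 1
  ring

lemma logMahler_eq (p : ℂ[X]) : logMahler p = p.logMahlerMeasure := by
  have h := intervalIntegral.integral_comp_mul_left
    (fun x => Real.log ‖p.eval (circleMap 0 1 x)‖) (a := 0) (b := 1) (c := 2 * Real.pi)
    (by positivity)
  rw [logMahler, logMahlerMeasure_def, Real.circleAverage_def]
  simp only [e_eq_circleMap]
  rw [h]
  simp

lemma intervalIntegrable_log (p : ℂ[X]) :
    IntervalIntegrable (fun k => Real.log ‖p.eval (e k)‖) volume 0 1 := by
  have h := (p.intervalIntegrable_mahlerMeasure).comp_mul_left (c := 2 * Real.pi)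
  simp only [e_eq_circleMap]
  convert h using 1
  · simp
  · field_simp

/-- `log |p|` on the circle. -/
def logC (p : ℂ[X]) (x : UnitAddCircle) : ℝ := Real.log ‖p.eval (AddCircle.toCircle x : ℂ)‖

lemma logC_measurable (p : ℂ[X]) : Measurable (logC p) := by
  have : Continuous fun x : UnitAddCircle => ‖p.eval (AddCircle.toCircle x : ℂ)‖ :=
    (p.continuous.comp (continuous_subtype_val.comp AddCircle.continuous_toCircle)).norm
  exact Real.measurable_log.comp this.measurable

lemma logC_coe (p : ℂ[X]) (k : ℝ) : logC p (k : UnitAddCircle) = Real.log ‖p.eval (e k)‖ := by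
  rw [e_eq_toCircle, logC]

lemma logC_integrable (p : ℂ[X]) : Integrable (logC p) volume := by
  have h := UnitAddCircle.measurePreserving_mk 0
  rw [← h.integrable_comp (logC_measurable p).aestronglyMeasurable]
  have h2 := intervalIntegrable_log p
  rw [intervalIntegrable_iff_integrableOn_Ioc_of_le zero_le_one] at h2
  simpa [Function.comp_def, logC_coe, IntegrableOn] using h2

lemma logC_integral (p : ℂ[X]) : ∫ x, logC p x = logMahler p := by
  rw [← UnitAddCircle.intervalIntegral_preimage 0, logMahler]
  simp only [logC_coe, zero_add]

lemma ae_of_circle {P : UnitAddCircle → Prop} (h : ∀ᵐ x : UnitAddCircle, P x) :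
    ∀ᵐ k : ℝ, P (k : UnitAddCircle) := by
  have h1 : ∀ t : ℤ, ∀ᵐ k : ℝ ∂(volume.restrict (Set.Ioc (t : ℝ) (t + 1))), P (k : UnitAddCircle) :=
    fun t => by
      have h3 := (UnitAddCircle.measurePreserving_mk (t : ℝ)).quasiMeasurePreserving
      exact h3.ae h
  have h2 := (ae_restrict_iUnion_iff (fun t : ℤ => Set.Ioc (t : ℝ) (t + 1))
    (μ := volume) (fun k : ℝ => P (k : UnitAddCircle))).2 h1
  rwa [iUnion_Ioc_intCast, Measure.restrict_univ] at h2

lemma iterate_coe (L : ℕ) (j : ℕ) (k : ℝ) :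
    (fun y : UnitAddCircle => L • y)^[j] (k : UnitAddCircle) = (((L : ℝ) ^ j * k : ℝ) : UnitAddCircle) := by
  induction j with
  | zero => simp
  | succ j ih =>
    rw [Function.iterate_succ_apply', ih, ← AddCircle.coe_nsmul]
    congr 1
    simp only [nsmul_eq_mul]
    ring

lemma birkhoff_poly {L : ℕ} (hL : 2 ≤ L) (p : ℂ[X]) :
    ∀ᵐ k : ℝ, ∀ ε : ℝ, 0 < ε → ∀ᶠ n : ℕ in atTop,
      |∑ j ∈ Finset.range n, Real.log ‖p.eval (e ((L : ℝ) ^ j * k))‖ - n * logMahler p|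
        ≤ n * ε := by
  have hT : Ergodic (fun y : UnitAddCircle => L • y) volume := AddCircle.ergodic_nsmul (by omega)
  have : IsProbabilityMeasure (volume : Measure UnitAddCircle) :=
    ⟨UnitAddCircle.measure_univ⟩
  have h := ae_of_circle (birkhoff_ae hT (logC_measurable p) (logC_integrable p))
  filter_upwards [h] with k hk
  simpa only [birkhoffSum, iterate_coe, logC_coe, logC_integral] using hk

lemma e_fiber_countable (z : ℂ) : {k : ℝ | e k = z}.Countable := by
  rcases Set.eq_empty_or_nonempty {k : ℝ | e k = z} with h | ⟨k₀, hk₀⟩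
  · rw [h]; exact Set.countable_empty
  refine (Set.countable_range fun n : ℤ => k₀ + n).mono fun k hk => ?_
  have h1 : e k = e k₀ := Eq.trans hk (Eq.symm hk₀)
  rw [e, e, Complex.exp_eq_exp_iff_exists_int] at h1
  obtain ⟨n, hn⟩ := h1
  refine ⟨n, ?_⟩
  have h2 : (2 * Real.pi * Complex.I : ℂ) * k = (2 * Real.pi * Complex.I) * (k₀ + n) := by
    rw [hn]; ring
  have h3 := mul_left_cancel₀ Complex.two_pi_I_ne_zero h2
  exact_mod_cast h3.symm

lemma ae_eval_ne_zero {p : ℂ[X]} (hp : p ≠ 0) : ∀ᵐ k : ℝ, p.eval (e k) ≠ 0 := by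
  have hc : {k : ℝ | p.eval (e k) = 0}.Countable := by
    have : (⋃ z ∈ (p.roots.toFinset : Set ℂ), {k : ℝ | e k = z}).Countable :=
      (p.roots.toFinset.finite_toSet.countable).biUnion fun z _ => e_fiber_countable z
    refine this.mono fun k hk => ?_
    simp only [Set.mem_iUnion]
    refine ⟨e k, ?_, rfl⟩
    simpa [hp] using hk
  rw [ae_iff]
  simpa using hc.measure_zero volume

lemma ae_ne_zero {L : ℕ} (hL : 2 ≤ L) {p : ℂ[X]} (hp : p ≠ 0) :
    ∀ᵐ k : ℝ, ∀ j : ℕ, p.eval (e ((L : ℝ) ^ j * k)) ≠ 0 := by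
  rw [ae_all_iff]
  intro j
  have hL0 : L ^ j ≠ 0 := pow_ne_zero _ (by omega)
  have hq : expand ℂ (L ^ j) p ≠ 0 := (expand_ne_zero (Nat.pos_of_ne_zero hL0)).2 hp
  filter_upwards [ae_eval_ne_zero hq] with k hk
  rw [expand_eval, ← e_mul_nat] at hk
  simpa using hk

end circle

lemma opNorm_le_sum (M : Matrix (Fin 2) (Fin 2) ℂ) :
    opNorm M ≤ ‖M 0 0‖ + ‖M 0 1‖ + ‖M 1 0‖ + ‖M 1 1‖ := by
  refine ContinuousLinearMap.opNorm_le_bound _ (by positivity) fun x => ?_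
  have h0 : ‖x 0‖ ≤ ‖x‖ := PiLp.norm_apply_le x 0
  have h1 : ‖x 1‖ ≤ ‖x‖ := PiLp.norm_apply_le x 1
  set y := Matrix.toEuclideanCLM (𝕜 := ℂ) M x with hy
  have hy0 : y 0 = M 0 0 * x 0 + M 0 1 * x 1 := by
    simp [hy, Matrix.ofLp_toEuclideanCLM, Matrix.mulVec, dotProduct, Fin.sum_univ_two]
  have hy1 : y 1 = M 1 0 * x 0 + M 1 1 * x 1 := by
    simp [hy, Matrix.ofLp_toEuclideanCLM, Matrix.mulVec, dotProduct, Fin.sum_univ_two]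
  have hn : ‖y‖ ≤ ‖y 0‖ + ‖y 1‖ := by
    rw [EuclideanSpace.norm_eq, Fin.sum_univ_two]
    refine Real.sqrt_le_iff.2 ⟨by positivity, ?_⟩
    nlinarith [norm_nonneg (y 0), norm_nonneg (y 1)]
  have h2 : ‖y 0‖ ≤ ‖M 0 0‖ * ‖x‖ + ‖M 0 1‖ * ‖x‖ := by
    rw [hy0]
    refine (norm_add_le _ _).trans ?_
    rw [norm_mul, norm_mul]
    gcongr
  have h3 : ‖y 1‖ ≤ ‖M 1 0‖ * ‖x‖ + ‖M 1 1‖ * ‖x‖ := by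
    rw [hy1]
    refine (norm_add_le _ _).trans ?_
    rw [norm_mul, norm_mul]
    gcongr
  linarith

lemma le_opNorm (M : Matrix (Fin 2) (Fin 2) ℂ) (D : ℂ) (h0 : M 0 0 - M 0 1 = D)
    (h1 : M 1 0 - M 1 1 = -D) : ‖D‖ ≤ opNorm M := by
  set v : EuclideanSpace ℂ (Fin 2) := !₂[1, -1] with hv
  have hMv : Matrix.toEuclideanCLM (𝕜 := ℂ) M v = D • v := by
    ext i
    fin_cases i
    · simp [hv, Matrix.ofLp_toEuclideanCLM, Matrix.mulVec, dotProduct, Fin.sum_univ_two, ← h0,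
        sub_eq_add_neg]
    · have : D = -(M 1 0 - M 1 1) := by rw [h1]; ring
      simp [hv, Matrix.ofLp_toEuclideanCLM, Matrix.mulVec, dotProduct, Fin.sum_univ_two, this]
      ring
  have hv0 : 0 < ‖v‖ := by
    rw [norm_pos_iff]
    intro h
    have : v 0 = 0 := by rw [h]; rfl
    simp [hv] at this
  have := (Matrix.toEuclideanCLM (𝕜 := ℂ) M).le_opNorm v
  rw [hMv, norm_smul] at this
  exact le_of_mul_le_mul_right this hv0

lemma exists_const_bound {x : ℕ → ℝ} {a : ℝ} (h : ∀ᶠ n : ℕ in atTop, x n ≤ Real.exp (n * a)) :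
    ∃ C : ℝ, 0 < C ∧ ∀ n : ℕ, x n ≤ C * Real.exp (n * a) := by
  obtain ⟨N, hN⟩ := eventually_atTop.1 h
  refine ⟨1 + ∑ j ∈ Finset.range N, |x j| * Real.exp (-(j * a)), by positivity, fun n => ?_⟩
  by_cases hn : N ≤ n
  · refine (hN n hn).trans (le_mul_of_one_le_left (Real.exp_pos _).le ?_)
    have : 0 ≤ ∑ j ∈ Finset.range N, |x j| * Real.exp (-(j * a)) := by positivity
    linarith
  · have h1 : |x n| * Real.exp (-(n * a)) ≤ ∑ j ∈ Finset.range N, |x j| * Real.exp (-(j * a)) :=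
      Finset.single_le_sum (f := fun j : ℕ => |x j| * Real.exp (-(j * a)))
        (fun j _ => by positivity) (Finset.mem_range.2 (by omega))
    calc x n ≤ |x n| := le_abs_self _
      _ = |x n| * Real.exp (-(n * a)) * Real.exp (n * a) := by
          rw [mul_assoc, ← Real.exp_add]; simp
      _ ≤ _ := by gcongr; linarith

/-- The deterministic core estimate. -/
lemma core (M B : ℕ → Matrix (Fin 2) (Fin 2) ℂ) (d t : ℕ → ℂ) (K m μ : ℝ)
    (hM0 : M 0 = 1) (hM : ∀ n, M (n + 1) = M n * B n)
    (hB0 : ∀ n, B n 0 0 - B n 0 1 = d n) (hB1 : ∀ n, B n 1 0 - B n 1 1 = - d n)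
    (hBs : ∀ n, (B n 0 0 + B n 1 0) * t n = t (n + 1))
    (hd : ∀ n, d n ≠ 0) (ht : ∀ n, t n ≠ 0) (ht2 : ∀ n, ‖t n‖ ≤ 2)
    (hK : ∀ n, ‖B n 1 0‖ ≤ K) (hm : 0 ≤ m)
    (hdm : ∀ ε : ℝ, 0 < ε → ∀ᶠ n : ℕ in atTop,
      |∑ j ∈ Finset.range n, Real.log ‖d j‖ - n * m| ≤ n * ε)
    (htm : ∀ ε : ℝ, 0 < ε → ∀ᶠ n : ℕ in atTop,
      |∑ j ∈ Finset.range n, Real.log ‖t j‖ - n * μ| ≤ n * ε) :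
    Tendsto (fun n : ℕ => (1 / n : ℝ) * Real.log (opNorm (M n))) atTop (nhds m) := by
  set D : ℕ → ℂ := fun n => ∏ j ∈ Finset.range n, d j with hD
  have hDs : ∀ n, D (n + 1) = D n * d n := fun n => Finset.prod_range_succ _ _
  have hD0 : ∀ n, D n ≠ 0 := fun n => Finset.prod_ne_zero_iff.2 fun j _ => hd j
  have hDlog : ∀ n, Real.log ‖D n‖ = ∑ j ∈ Finset.range n, Real.log ‖d j‖ := by
    intro n
    rw [hD]
    simp only [norm_prod]
    exact Real.log_prod fun j _ => norm_ne_zero_iff.2 (hd j)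
  -- structure of the product
  have hMd : ∀ n, M n 0 0 - M n 0 1 = D n ∧ M n 1 0 - M n 1 1 = - D n := by
    intro n
    induction n with
    | zero => simp [hM0, hD]
    | succ n ih =>
      obtain ⟨i1, i2⟩ := ih
      have b0 := hB0 n
      have b1 := hB1 n
      rw [hM, hDs]
      simp only [Matrix.mul_apply, Fin.sum_univ_two]
      constructor
      · linear_combination M n 0 0 * b0 + M n 0 1 * b1 + d n * i1
      · linear_combination M n 1 0 * b0 + M n 1 1 * b1 + d n * i2
  have hMs : ∀ n, (M n 0 0 + M n 1 0) * t 0 = t n := by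
    intro n
    induction n with
    | zero => simp [hM0]
    | succ n ih =>
      obtain ⟨i1, i2⟩ := hMd n
      have b0 := hB0 n
      have bs := hBs n
      rw [hM]
      simp only [Matrix.mul_apply, Fin.sum_univ_two]
      linear_combination bs + (B n 0 0 + B n 1 0) * ih - B n 1 0 * t 0 * (i1 + i2)
  have hMa : ∀ n, M n 0 0 / t n =
      1 / t 0 - ∑ j ∈ Finset.range n, D j * B j 1 0 / t (j + 1) := by
    intro n
    induction n with
    | zero => simp [hM0]
    | succ n ih =>
      obtain ⟨i1, i2⟩ := hMd n
      rw [Finset.sum_range_succ, ← sub_sub, ← ih, hM]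
      simp only [Matrix.mul_apply, Fin.sum_univ_two]
      have h1 := ht n
      have h2 := ht (n + 1)
      have bs := hBs n
      field_simp
      linear_combination M n 0 0 * bs - B n 1 0 * t n * i1
  have hK0 : 0 ≤ K := (norm_nonneg _).trans (hK 0)
  have hlow : ∀ n, ‖D n‖ ≤ opNorm (M n) := fun n => le_opNorm _ _ (hMd n).1 (hMd n).2
  -- growth upper bound
  have hup : ∀ ε : ℝ, 0 < ε → ∃ C : ℝ, 0 < C ∧
      ∀ n : ℕ, opNorm (M n) ≤ C * Real.exp (n * (m + 3 * ε)) := by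
    intro ε hε
    obtain ⟨C1, hC1, hD1⟩ : ∃ C : ℝ, 0 < C ∧ ∀ n : ℕ, ‖D n‖ ≤ C * Real.exp (n * (m + ε)) := by
      apply exists_const_bound
      filter_upwards [hdm ε hε] with n hn
      rw [← Real.log_le_iff_le_exp (norm_pos_iff.2 (hD0 n)), hDlog]
      linarith [(abs_le.1 hn).2]
    obtain ⟨C2, hC2, hT2⟩ : ∃ C : ℝ, 0 < C ∧
        ∀ n : ℕ, ‖t (n + 1)‖⁻¹ ≤ C * Real.exp (n * ε) := by
      apply exists_const_bound
      have hε3 : 0 < ε / 3 := by positivity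
      obtain ⟨N, hN⟩ := exists_nat_ge ((ε - μ) / (ε / 3))
      filter_upwards [(tendsto_add_atTop_nat 1).eventually (htm _ hε3),
        (tendsto_add_atTop_nat 2).eventually (htm _ hε3), eventually_ge_atTop N] with n h1 h2 h3
      have hn : (N : ℝ) ≤ n := by exact_mod_cast h3
      rw [div_le_iff₀ hε3] at hN
      have h4 : (N : ℝ) * (ε / 3) ≤ n * (ε / 3) := by gcongr
      rw [← Real.log_le_iff_le_exp (inv_pos.2 (norm_pos_iff.2 (ht _))), Real.log_inv]
      have h5 := (abs_le.1 h1).2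
      have h6 := (abs_le.1 h2).1
      rw [Finset.sum_range_succ] at h6
      push_cast at h5 h6
      nlinarith
    set C3 := C1 * C2 * K with hC3
    have hC30 : 0 ≤ C3 := by positivity
    have hexp1 : ∀ n : ℕ, 1 ≤ Real.exp (n * (m + 3 * ε)) := fun n =>
      Real.one_le_exp (by positivity)
    have ht0 : 0 < ‖t 0‖ := norm_pos_iff.2 (ht 0)
    have hsum : ∀ n : ℕ, ‖∑ j ∈ Finset.range n, D j * B j 1 0 / t (j + 1)‖ ≤
        C3 / ε * Real.exp (n * (m + 3 * ε)) := by
      intro n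
      have hterm : ∀ j ∈ Finset.range n, ‖D j * B j 1 0 / t (j + 1)‖ ≤
          C3 * Real.exp (n * (m + 2 * ε)) := by
        intro j hj
        have hjn : (j : ℝ) ≤ n := by exact_mod_cast (Finset.mem_range.1 hj).le
        rw [norm_div, norm_mul, div_eq_mul_inv]
        calc ‖D j‖ * ‖B j 1 0‖ * ‖t (j + 1)‖⁻¹
            ≤ (C1 * Real.exp (j * (m + ε))) * K * (C2 * Real.exp (j * ε)) := by
              gcongr
              · exact hD1 j
              · exact hK j
              · exact hT2 j
          _ = C3 * Real.exp (j * (m + 2 * ε)) := by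
              rw [show (j : ℝ) * (m + 2 * ε) = j * (m + ε) + j * ε by ring, Real.exp_add]
              ring
          _ ≤ _ := by gcongr
      refine (norm_sum_le_of_le _ hterm).trans ?_
      rw [Finset.sum_const, Finset.card_range, nsmul_eq_mul]
      have h1 : (n : ℝ) * ε ≤ Real.exp (n * ε) := by
        linarith [Real.add_one_le_exp ((n : ℝ) * ε)]
      have h2 : (n : ℝ) ≤ Real.exp (n * ε) / ε := by rwa [le_div_iff₀ hε]
      calc (n : ℝ) * (C3 * Real.exp (n * (m + 2 * ε)))
          ≤ Real.exp (n * ε) / ε * (C3 * Real.exp (n * (m + 2 * ε))) := by gcongr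
        _ = _ := by
          rw [show (n : ℝ) * (m + 3 * ε) = n * ε + n * (m + 2 * ε) by ring, Real.exp_add]
          ring
    have ha : ∀ n : ℕ, ‖M n 0 0‖ ≤
        2 * (1 / ‖t 0‖ + C3 / ε) * Real.exp (n * (m + 3 * ε)) := by
      intro n
      have h1 : M n 0 0 = t n * (1 / t 0 - ∑ j ∈ Finset.range n, D j * B j 1 0 / t (j + 1)) := by
        rw [← hMa, mul_div_cancel₀ _ (ht n)]
      rw [h1, norm_mul, mul_assoc]
      have h2 : ‖1 / t 0 - ∑ j ∈ Finset.range n, D j * B j 1 0 / t (j + 1)‖ ≤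
          (1 / ‖t 0‖ + C3 / ε) * Real.exp (n * (m + 3 * ε)) := by
        refine (norm_sub_le _ _).trans ?_
        rw [norm_div, norm_one, add_mul]
        exact add_le_add (le_mul_of_one_le_right (by positivity) (hexp1 n)) (hsum n)
      exact mul_le_mul (ht2 n) h2 (norm_nonneg _) (by norm_num)
    have hDn : ∀ n : ℕ, ‖D n‖ ≤ C1 * Real.exp (n * (m + 3 * ε)) := by
      intro n
      refine (hD1 n).trans ?_
      have : m + ε ≤ m + 3 * ε := by linarith
      gcongr
    have hsn : ∀ n : ℕ, ‖M n 0 0 + M n 1 0‖ ≤ 2 / ‖t 0‖ * Real.exp (n * (m + 3 * ε)) := by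
      intro n
      have h1 : M n 0 0 + M n 1 0 = t n / t 0 := by rw [← hMs n, mul_div_cancel_right₀ _ (ht 0)]
      rw [h1, norm_div]
      calc ‖t n‖ / ‖t 0‖ ≤ 2 / ‖t 0‖ := by gcongr; exact ht2 n
        _ ≤ _ := le_mul_of_one_le_right (by positivity) (hexp1 n)
    refine ⟨4 * (2 * (1 / ‖t 0‖ + C3 / ε)) + 2 * C1 + 2 * (2 / ‖t 0‖), by positivity, fun n => ?_⟩
    refine (opNorm_le_sum _).trans ?_
    obtain ⟨i1, i2⟩ := hMd n
    have e1 : ‖M n 0 1‖ ≤ ‖M n 0 0‖ + ‖D n‖ := by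
      have : M n 0 1 = M n 0 0 - D n := by linear_combination -i1
      rw [this]; exact norm_sub_le _ _
    have e2 : ‖M n 1 0‖ ≤ ‖M n 0 0 + M n 1 0‖ + ‖M n 0 0‖ := by
      have : M n 1 0 = (M n 0 0 + M n 1 0) - M n 0 0 := by ring
      conv_lhs => rw [this]
      exact norm_sub_le _ _
    have e3 : ‖M n 1 1‖ ≤ ‖M n 1 0‖ + ‖D n‖ := by
      have : M n 1 1 = M n 1 0 + D n := by linear_combination -i2
      rw [this]; exact norm_add_le _ _
    have := ha n
    have := hDn n
    have := hsn n
    rw [add_mul, add_mul]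
    linarith
  -- conclusion
  rw [Metric.tendsto_atTop']
  intro ε hε
  obtain ⟨C, hC, hCM⟩ := hup (ε / 6) (by positivity)
  obtain ⟨N1, hN1⟩ := eventually_atTop.1 (hdm (ε / 2) (by positivity))
  obtain ⟨N2, hN2⟩ := exists_nat_gt (Real.log C / (ε / 2))
  rw [div_lt_iff₀ (by positivity)] at hN2
  refine ⟨N1 + N2, fun n hn => ?_⟩
  have hn0 : (0 : ℝ) < n := by exact_mod_cast (by omega : 0 < n)
  have hn2 : (N2 : ℝ) * (ε / 2) ≤ n * (ε / 2) := by
    have : (N2 : ℝ) ≤ n := by exact_mod_cast (by omega : N2 ≤ n)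
    gcongr
  have hDpos : 0 < ‖D n‖ := norm_pos_iff.2 (hD0 n)
  have hl : n * m - n * (ε / 2) ≤ Real.log (opNorm (M n)) := by
    have h1 := (abs_le.1 (hN1 n (by omega))).1
    rw [← hDlog] at h1
    have := Real.log_le_log hDpos (hlow n)
    linarith
  have hu : Real.log (opNorm (M n)) ≤ Real.log C + n * (m + 3 * (ε / 6)) := by
    have := Real.log_le_log (hDpos.trans_le (hlow n)) (hCM n)
    rwa [Real.log_mul hC.ne' (Real.exp_pos _).ne', Real.log_exp] at this
  rw [Real.dist_eq, abs_lt]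
  have hr : (1 / n : ℝ) * Real.log (opNorm (M n)) = Real.log (opNorm (M n)) / n := by ring
  rw [hr]
  constructor
  · rw [neg_lt_sub_iff_lt_add, ← sub_lt_iff_lt_add', lt_div_iff₀ hn0]
    nlinarith
  · rw [sub_lt_iff_lt_add, div_lt_iff₀ hn0]
    nlinarith

section poly
variable {L : ℕ} (wa wb : Fin L → Fin 2)

lemma posPoly_eval (S : Finset (Fin L)) (u : ℂ) : (posPoly S).eval u = ∑ z ∈ S, u ^ (z : ℕ) := by
  simp [posPoly, eval_finsetSum]

lemma posPoly_sum (u : ℂ) : (posPoly (Ca wa wb)).eval u + (posPoly (Cb wa wb)).eval u +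
    (posPoly (Pa wa wb)).eval u + (posPoly (Pb wa wb)).eval u = ∑ i ∈ Finset.range L, u ^ i := by
  simp only [posPoly_eval, Ca, Cb, Pa, Pb, Finset.sum_filter, ← Finset.sum_add_distrib]
  rw [← Fin.sum_univ_eq_sum_range]
  refine Finset.sum_congr rfl fun i _ => ?_
  generalize wa i = x
  generalize wb i = y
  fin_cases x <;> fin_cases y <;> simp

lemma posPoly_bound (S : Finset (Fin L)) (k : ℝ) : ‖(posPoly S).eval (e k)‖ ≤ L := by
  rw [posPoly_eval]
  refine (norm_sum_le _ _).trans ?_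
  simp only [norm_pow, norm_e, one_pow, Finset.sum_const, nsmul_eq_mul, mul_one]
  exact_mod_cast (Finset.card_le_univ S).trans (by simp)

lemma logMahler_nonneg (S S' : Finset (Fin L)) (h : posPoly S ≠ posPoly S') :
    0 ≤ logMahler (posPoly S - posPoly S') := by
  set q : ℤ[X] := ∑ z ∈ S, X ^ (z : ℕ) - ∑ z ∈ S', X ^ (z : ℕ) with hq
  have hmap : posPoly S - posPoly S' = q.map (Int.castRingHom ℂ) := by
    simp [hq, posPoly, Polynomial.map_sum]
  have hq0 : q ≠ 0 := by
    intro h0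
    rw [h0, Polynomial.map_zero, sub_eq_zero] at hmap
    exact h hmap
  rw [logMahler_eq, logMahlerMeasure_eq_log_MahlerMeasure, hmap]
  refine Real.log_nonneg (one_le_mahlerMeasure_of_one_le_norm_leadingCoeff ?_)
  rw [leadingCoeff_map_of_injective (RingHom.injective_int _)]
  have : q.leadingCoeff ≠ 0 := leadingCoeff_ne_zero.2 hq0
  simp only [eq_intCast, Complex.norm_intCast]
  exact_mod_cast Int.one_le_abs this

end poly

/-- For a binary constant-length substitution of length `L ≥ 2` with `Q ≠ R`,
for Lebesgue-a.e. `k` the limit `lim (1/n) log ‖B(k)·B(Lk)⋯B(L^{n-1}k)‖` exists and equals the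
logarithmic Mahler measure `m(Q - R)`; equivalently the minimal Lyapunov exponent of the outward
cocycle is `log √L - m(Q - R)` almost everywhere. -/
theorem binary_substitution_min_Lyapunov_exponent
    (L : ℕ) (hL : 2 ≤ L) (wa wb : Fin L → Fin 2)
    (hQR : posPoly (Pa wa wb) ≠ posPoly (Pb wa wb)) :
    ∀ᵐ k : ℝ,
      Tendsto (fun n : ℕ => (1 / n : ℝ) * Real.log (opNorm (cocycleProd wa wb k n)))
        atTop (nhds (logMahler (posPoly (Pa wa wb) - posPoly (Pb wa wb)))) := by
  have hX : (X - C 1 : ℂ[X]) ≠ 0 := X_sub_C_ne_zero 1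
  have hp : posPoly (Pa wa wb) - posPoly (Pb wa wb) ≠ 0 := sub_ne_zero.2 hQR
  filter_upwards [birkhoff_poly hL (posPoly (Pa wa wb) - posPoly (Pb wa wb)),
    birkhoff_poly hL (X - C 1 : ℂ[X]), ae_ne_zero hL hp, ae_ne_zero hL hX] with k h1 h2 h3 h4
  refine core (cocycleProd wa wb k) (fun n => FourierB wa wb ((L : ℝ) ^ n * k))
    (fun n => (posPoly (Pa wa wb) - posPoly (Pb wa wb)).eval (e ((L : ℝ) ^ n * k)))
    (fun n => (X - C 1 : ℂ[X]).eval (e ((L : ℝ) ^ n * k))) (L + L) _ (logMahler (X - C 1))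
    ?_ ?_ ?_ ?_ ?_ h3 h4 ?_ ?_ (logMahler_nonneg _ _ hQR) h1 h2
  · simp [cocycleProd]
  · intro n
    simp [cocycleProd, List.range_succ]
  · intro n
    simp [FourierB]
  · intro n
    simp [FourierB]
  · intro n
    have hpow : e ((L : ℝ) ^ (n + 1) * k) = e ((L : ℝ) ^ n * k) ^ L := by
      rw [← e_mul_nat]; congr 1; ring
    simp only [FourierB, eval_sub, eval_X, eval_C, hpow, eval_add]
    rw [← geom_sum_mul, ← posPoly_sum wa wb]
    simp
    left
    ring
  · intro n
    simp only [eval_sub, eval_X, eval_C]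
    refine (norm_sub_le _ _).trans ?_
    rw [norm_e, norm_one]
    norm_num
  · intro n
    simp only [FourierB, eval_add]
    refine (norm_add_le _ _).trans (add_le_add ?_ ?_)
    · exact posPoly_bound _ _
    · exact posPoly_bound _ _
end
end

section
/- Let L ≥ 2 and let Q and R be polynomials with coefficients in {0,1}, with disjoint supports, both supported in degrees {0,…,L−1}. Let c = L − (card(supp Q) + card(supp R)) be the number of positions in {0,…,L−1} lying in neither support. If c ≥ 1 and Q − R is nonzero and is not a monomial, then m(Q−R) = ∫₀¹ log|(Q−R)(e^{2πik})| dk < (1/2)·log(L − c). -/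
open Polynomial

noncomputable section

theorem aux_monomial (P : ℂ[X]) (hreal : ∀ n, (starRingEnd ℂ) (P.coeff n) = P.coeff n) (N : ℝ)
    (hN : 0 < N) (hinf : {z : ℂ | ‖z‖ = 1 ∧ ‖P.eval z‖ ^ 2 = N}.Infinite) :
    ∃ (a : ℂ) (n : ℕ), P = C a * X ^ n := by
  have key : P * P.reverse = C (N : ℂ) * X ^ P.natDegree := by
    apply Polynomial.eq_of_infinite_eval_eq
    refine hinf.mono ?_
    rintro z ⟨hz, hP⟩
    have hz0 : z ≠ 0 := by
      rintro rfl
      simp at hz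
    have hconj : (starRingEnd ℂ) (P.eval z) = P.eval z⁻¹ := by
      rw [Complex.inv_eq_conj hz, Polynomial.eval_eq_sum, Polynomial.eval_eq_sum,
        Polynomial.sum, Polynomial.sum, map_sum]
      refine Finset.sum_congr rfl fun n _ => ?_
      rw [map_mul, map_pow, hreal]
    have hrev : P.reverse.eval z = P.eval z⁻¹ * z ^ P.natDegree := by
      letI : Invertible z⁻¹ := invertibleOfNonzero (inv_ne_zero hz0)
      have h := Polynomial.eval₂_reverse_mul_pow (RingHom.id ℂ) z⁻¹ P
      simp only [invOf_eq_inv, inv_inv] at h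
      change P.reverse.eval z * _ = P.eval z⁻¹ at h
      rw [← h, mul_assoc, ← mul_pow, inv_mul_cancel₀ hz0, one_pow, mul_one]
    show eval z _ = eval z _
    rw [eval_mul, hrev, ← hconj, ← mul_assoc, Complex.mul_conj, Complex.normSq_eq_norm_sq, hP]
    simp
  have hu : IsUnit (C (N : ℂ)) := by
    rw [Polynomial.isUnit_C, isUnit_iff_ne_zero]
    exact_mod_cast hN.ne'
  have hdvd : P ∣ X ^ P.natDegree := (hu.dvd_mul_left).1 (Dvd.intro _ key)
  obtain ⟨i, -, hi⟩ := (dvd_prime_pow Polynomial.prime_X _).1 hdvd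
  obtain ⟨u, hu⟩ := hi.symm
  obtain ⟨a, -, ha⟩ := Polynomial.isUnit_iff.1 u.isUnit
  exact ⟨a, i, by rw [← hu, ← ha, mul_comm]⟩

theorem aux_avg (f : ℂ → ℝ) :
    Real.circleAverage f 0 1 = ∫ k in (0:ℝ)..1, f (e k) := by
  have h := intervalIntegral.integral_comp_mul_left (a := 0) (b := 1)
    (fun θ => f (circleMap 0 1 θ)) (c := 2 * Real.pi) (by positivity)
  rw [Real.circleAverage_def]
  simp only [mul_zero, mul_one] at h
  rw [← h]
  congr 1
  ext k
  congr 1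
  simp only [circleMap, e]
  push_cast
  simp only [zero_add, one_mul]
  congr 1
  ring

theorem aux_strict (P : ℂ[X]) (hP0 : P ≠ 0) (N : ℝ) (hN : 0 < N)
    (hsum : ∑ i ∈ P.support, ‖P.coeff i‖ ^ 2 = N)
    (hfin : {z : ℂ | ‖z‖ = 1 ∧ ‖P.eval z‖ ^ 2 = N}.Finite) :
    Real.circleAverage (fun z => Real.log ‖P.eval z‖) 0 1 < 1 / 2 * Real.log N := by
  rw [Polynomial.sum_sq_norm_coeff_eq_circleAverage] at hsum
  have hcont : Continuous (fun x : ℝ ↦ ‖eval (circleMap 0 1 x) P‖ ^ 2) := by fun_prop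
  have hnull : ∀ᵐ θ : ℝ, Real.log ‖P.eval (circleMap 0 1 θ)‖ <
      1 / 2 * (N⁻¹ * ‖P.eval (circleMap 0 1 θ)‖ ^ 2 + (Real.log N - 1)) := by
    have hc : ({z : ℂ | ‖z‖ = 1 ∧ ‖P.eval z‖ ^ 2 = N} ∪ {z | P.IsRoot z}).Countable :=
      (hfin.union (Polynomial.finite_setOf_isRoot hP0)).countable
    filter_upwards [MeasureTheory.measure_eq_zero_iff_ae_notMem.mp
      ((hc.preimage_circleMap 0 one_ne_zero).measure_zero MeasureTheory.volume)] with θ hθ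
    simp only [Set.mem_preimage, Set.mem_union, not_or] at hθ
    obtain ⟨h1, h2⟩ := hθ
    have h1' : ‖P.eval (circleMap 0 1 θ)‖ ^ 2 ≠ N := fun h => h1 ⟨by simp, h⟩
    have h2' : 0 < ‖P.eval (circleMap 0 1 θ)‖ := norm_pos_iff.2 h2
    set t := ‖P.eval (circleMap 0 1 θ)‖
    have h3 : N⁻¹ * t ^ 2 ≠ 1 := by
      intro h
      apply h1'
      field_simp at h
      exact h
    have h4 := Real.log_lt_sub_one_of_pos (by positivity) h3
    rw [Real.log_mul (by positivity) (by positivity), Real.log_inv, Real.log_pow] at h4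
    push_cast at h4
    linarith
  have hlt := intervalIntegral.integral_lt_integral_of_ae_le_of_measure_setOfPred_lt_ne_zero
    (μ := MeasureTheory.volume) (a := 0) (b := 2 * Real.pi) (by positivity)
    (f := fun θ => Real.log ‖P.eval (circleMap 0 1 θ)‖)
    (g := fun θ => 1 / 2 * (N⁻¹ * ‖P.eval (circleMap 0 1 θ)‖ ^ 2 + (Real.log N - 1)))
    P.intervalIntegrable_mahlerMeasure
    (Continuous.intervalIntegrable (by fun_prop) _ _)
    (MeasureTheory.ae_restrict_of_ae (hnull.mono fun _ h => h.le))
    (by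
      intro h0
      have h5 := MeasureTheory.measure_eq_zero_iff_ae_notMem.mp h0
      have h6 := MeasureTheory.ae_restrict_of_ae (s := Set.Ioc 0 (2 * Real.pi)) hnull
      have h7 : ∀ᵐ θ ∂(MeasureTheory.volume.restrict (Set.Ioc 0 (2 * Real.pi))), False := by
        filter_upwards [h5, h6] with θ a b using a b
      rw [Filter.eventually_false_iff_eq_bot, MeasureTheory.ae_eq_bot,
        MeasureTheory.Measure.restrict_eq_zero, Real.volume_Ioc] at h7
      simp at h7
      linarith [Real.pi_pos])
  rw [intervalIntegral.integral_const_mul, intervalIntegral.integral_add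
    (Continuous.intervalIntegrable (by fun_prop) _ _) (by simp),
    intervalIntegral.integral_const_mul, intervalIntegral.integral_const] at hlt
  rw [Real.circleAverage_def] at hsum ⊢
  have hpi := Real.pi_pos
  simp only [smul_eq_mul, sub_zero] at hsum hlt ⊢
  rw [inv_mul_eq_iff_eq_mul₀ (by positivity)] at hsum
  rw [hsum] at hlt
  rw [inv_mul_lt_iff₀ (by positivity)]
  refine hlt.trans_eq ?_
  field_simp
  ring

/-- Let `Q, R` be 0-1 polynomials with disjoint supports, both supported in
degrees `{0,…,L-1}` with `L ≥ 2`, and let `c = L - (card(supp Q) + card(supp R))` be the number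
of positions in `{0,…,L-1}` lying in neither support. If `c ≥ 1` and `Q - R` is nonzero and not
a monomial, then `m(Q - R) < (1/2)·log(L - c)`. -/
theorem logMahler_lt_half_log_of_coincidence
    (L : ℕ) (hL : 2 ≤ L) (Q R : Polynomial ℂ)
    (hQ01 : ∀ n : ℕ, Q.coeff n = 0 ∨ Q.coeff n = 1)
    (hR01 : ∀ n : ℕ, R.coeff n = 0 ∨ R.coeff n = 1)
    (hdisj : Disjoint Q.support R.support)
    (hQdeg : Q.support ⊆ Finset.range L)
    (hRdeg : R.support ⊆ Finset.range L)
    (c : ℕ) (hc : c = L - (Q.support.card + R.support.card)) (hc1 : 1 ≤ c)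
    (hQR : Q - R ≠ 0)
    (hmono : ¬ ∃ (a : ℂ) (n : ℕ), Q - R = Polynomial.C a * Polynomial.X ^ n) :
    (∫ k in (0:ℝ)..1, Real.log ‖(Q - R).eval (e k)‖) <
      (1 / 2 : ℝ) * Real.log ((L : ℝ) - (c : ℝ)) := by
  classical
  have hcoef : ∀ n, (Q - R).coeff n = (if n ∈ Q.support then 1 else 0)
      - (if n ∈ R.support then 1 else 0) := by
    intro n
    rw [coeff_sub]
    congr 1
    · rcases hQ01 n with h | h <;> simp [h]
    · rcases hR01 n with h | h <;> simp [h]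
  have hsupp : (Q - R).support = Q.support ∪ R.support := by
    ext n
    rw [mem_support_iff, hcoef, Finset.mem_union]
    by_cases h1 : n ∈ Q.support <;> by_cases h2 : n ∈ R.support
    · exact absurd h2 (Finset.disjoint_left.1 hdisj h1)
    all_goals simp only [h1, h2]; simp
  have hsum : ∑ i ∈ (Q - R).support, ‖(Q - R).coeff i‖ ^ 2 = (L : ℝ) - c := by
    have h1 : ∀ i ∈ (Q - R).support, ‖(Q - R).coeff i‖ ^ 2 = (1 : ℝ) := by
      intro n hn
      rw [mem_support_iff] at hn
      rw [hcoef] at hn ⊢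
      split_ifs at hn ⊢ <;> simp at hn ⊢
    rw [Finset.sum_congr rfl h1, hsupp, Finset.sum_const, Finset.card_union_of_disjoint hdisj,
      nsmul_eq_mul, mul_one, eq_sub_iff_add_eq]
    norm_cast
    omega
  have hN : 0 < (L : ℝ) - c := by
    rw [← hsum]
    refine Finset.sum_pos (fun i hi => ?_) (by simpa using hQR)
    have := norm_pos_iff.2 (mem_support_iff.1 hi)
    positivity
  have hreal : ∀ n, (starRingEnd ℂ) ((Q - R).coeff n) = (Q - R).coeff n := by
    intro n
    rw [hcoef]
    split_ifs <;> simp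
  rw [← aux_avg (fun z => Real.log ‖(Q - R).eval z‖)]
  refine aux_strict _ hQR _ hN hsum ?_
  by_contra hinf
  exact hmono (aux_monomial _ hreal _ hN hinf)
end
end
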